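/- Suppose the sequences γ = (r_k)_{k≥0}, σ = (s_k)_{k≥0}, τ = (t_k)_{k≥1} of q-nonnegative polynomials satisfy s_0 ≥_q r_0·t_1 and s_k ≥_q r_k·t_{k+1} + 1 for all k ≥ 1. Then both the Catalan–Stieltjes matrix C^{γ,σ,τ} and the Hankel matrix H^{γ,σ,τ} are q-totally positive. -/

import Mathlib

/-!
Write `J` for the tridiagonal matrix with diagonal `s`, superdiagonal `r` and subdiagonal `t`.
The recurrence says that row `n + 1` of `c` is row `n` times `J`, so `c n k` is the `(0, k)` entry
of `J ^ n`. Total positivity passes to products by the Cauchy–Binet formula (`QTP.of_mul`).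

The matrix `J` is a product of a staircase matrix and a transposed staircase matrix, where row `k`
of a staircase matrix is supported in the columns `2k, 2k+1, 2k+2`. The first factor has the
entries `(a k, s k - r k * t (k+1) - a k, r k)` with `a 0 = 0` and `a k = 1` otherwise, the second
one `(1, 1, t (k+1))`; the hypotheses on `s` say exactly that the middle entries of the first one
are `q`-nonnegative. In a minor of a staircase matrix only the identity permutation contributes
(`qtp_stair`), so both factors, and hence `J`, are totally positive (`qtp_tri`).

A minor of `c` without row `0` comes from a minor in earlier rows by multiplication by `J`, and
row `0` is `(1, 0, 0, …)`, so `c` is totally positive by induction (`qtp_of_production`).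

Finally `c (i + j) 0 = ∑ k, (J ^ i) 0 k * (J ^ j) k 0`, so the Hankel matrix is the product of `c`
and the transpose of the Catalan–Stieltjes matrix with `r` and `t` exchanged. The hypotheses are
symmetric under this exchange, so both factors are totally positive.
-/

open Polynomial

/-- A polynomial is `q`-nonnegative if all of its coefficients are nonnegative. -/
def QNonneg (f : Polynomial ℝ) : Prop := ∀ i, 0 ≤ f.coeff i

/-- An infinite matrix is `q`-totally positive if every minor (determinant of a square
submatrix with strictly increasing row and column indices) is `q`-nonnegative. -/
def QTP (M : ℕ → ℕ → Polynomial ℝ) : Prop :=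
  ∀ (m : ℕ), 1 ≤ m → ∀ (i j : Fin m → ℕ), StrictMono i → StrictMono j →
    QNonneg (Matrix.det (Matrix.of fun a b => M (i a) (j b)))

lemma QNonneg.zero : QNonneg 0 := fun i => by simp

lemma QNonneg.one : QNonneg 1 := fun i => by
  rw [coeff_one]; split_ifs <;> norm_num

lemma QNonneg.add {f g : ℝ[X]} (hf : QNonneg f) (hg : QNonneg g) : QNonneg (f + g) :=
  fun i => by rw [coeff_add]; exact add_nonneg (hf i) (hg i)

lemma QNonneg.mul {f g : ℝ[X]} (hf : QNonneg f) (hg : QNonneg g) : QNonneg (f * g) :=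
  fun i => by rw [coeff_mul]; exact Finset.sum_nonneg fun p _ => mul_nonneg (hf _) (hg _)

lemma QNonneg.sum {ι : Type*} (s : Finset ι) (f : ι → ℝ[X]) (h : ∀ i ∈ s, QNonneg (f i)) :
    QNonneg (∑ i ∈ s, f i) :=
  fun i => by rw [finsetSum_coeff]; exact Finset.sum_nonneg fun p hp => h p hp i

lemma QNonneg.prod {ι : Type*} (s : Finset ι) (f : ι → ℝ[X]) (h : ∀ i ∈ s, QNonneg (f i)) :
    QNonneg (∏ i ∈ s, f i) :=
  Finset.prod_induction f QNonneg (fun _ _ => QNonneg.mul) QNonneg.one h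

/-! ### The Cauchy–Binet formula and products of totally positive matrices -/

/-- The Cauchy–Binet formula, summed over all index maps rather than over increasing ones; each
increasing map is then counted `m!` times. -/
lemma factorial_mul_det_mul {R : Type*} [CommRing R] {m N : ℕ}
    (A : Matrix (Fin m) (Fin N) R) (B : Matrix (Fin N) (Fin m) R) :
    (m.factorial : R) * (A * B).det =
      ∑ f : Fin m → Fin N, (A.submatrix id f).det * (B.submatrix f id).det := by
  have h1 : (A * B).det = ∑ f : Fin m → Fin N, (∏ a, A a (f a)) * (B.submatrix f id).det := by
    have h : A * B = fun a => ∑ l : Fin N, A a l • B l := by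
      ext a b
      simp [Matrix.mul_apply, Finset.sum_apply]
    have h2 := (Matrix.detRowAlternating (n := Fin m) (R := R)).toMultilinearMap.map_sum
      (fun a (l : Fin N) => A a l • B l)
    calc (A * B).det = Matrix.detRowAlternating (fun a => ∑ l : Fin N, A a l • B l) := by
          rw [h]; rfl
      _ = _ := h2
      _ = _ := by
        refine Finset.sum_congr rfl fun f _ => ?_
        exact (Matrix.detRowAlternating (n := Fin m) (R := R)).toMultilinearMap.map_smul_univ
          (fun a => A a (f a)) (fun a => B (f a))
  have h3 (σ : Equiv.Perm (Fin m)) : (A * B).det = ∑ f : Fin m → Fin N,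
      (Equiv.Perm.sign σ : R) * (∏ a, A a (f (σ a))) * (B.submatrix f id).det := by
    rw [h1, ← (Equiv.arrowCongr σ (Equiv.refl (Fin N))).symm.sum_comp]
    refine Finset.sum_congr rfl fun f _ => ?_
    have : B.submatrix ((Equiv.arrowCongr σ (Equiv.refl (Fin N))).symm f) id
        = (B.submatrix f id).submatrix σ id := by
      ext a b; simp
    rw [this, Matrix.det_permute]
    simp
    ring
  have h4 : (m.factorial : R) * (A * B).det = ∑ _σ : Equiv.Perm (Fin m), (A * B).det := by
    simp [Finset.card_univ, Fintype.card_perm]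
  rw [h4, Finset.sum_congr rfl fun σ _ => h3 σ, Finset.sum_comm]
  refine Finset.sum_congr rfl fun f _ => ?_
  rw [← Finset.sum_mul, ← Matrix.det_transpose (A.submatrix id f),
    Matrix.det_apply' (A.submatrix id f).transpose]
  rfl

/-- If all maximal minors of `A` and of `B` on increasing index sets are `q`-nonnegative, so is the
determinant of the product `M = A * B`; the hypothesis `hM` says that the inner sums are finite. -/
lemma det_mul_qnonneg {m : ℕ} (A : Fin m → ℕ → ℝ[X]) (B : ℕ → Fin m → ℝ[X])
    (M : Fin m → Fin m → ℝ[X])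
    (hM : ∀ a b, ∃ N₀, ∀ N ≥ N₀, M a b = ∑ l ∈ Finset.range N, A a l * B l b)
    (hA : ∀ f : Fin m → ℕ, StrictMono f → QNonneg (Matrix.of fun a b => A a (f b)).det)
    (hB : ∀ f : Fin m → ℕ, StrictMono f → QNonneg (Matrix.of fun a b => B (f a) b).det) :
    QNonneg (Matrix.of M).det := by
  choose N₀ hN₀ using hM
  obtain ⟨N, hN⟩ : ∃ N, ∀ a b, N₀ a b ≤ N :=
    ⟨∑ a, ∑ b, N₀ a b, fun a b =>
      (Finset.single_le_sum (f := fun b => N₀ a b) (fun _ _ => Nat.zero_le _)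
        (Finset.mem_univ b)).trans
      (Finset.single_le_sum (f := fun a => ∑ b, N₀ a b) (fun _ _ => Nat.zero_le _)
        (Finset.mem_univ a))⟩
  let A' : Matrix (Fin m) (Fin N) ℝ[X] := Matrix.of fun a l => A a l
  let B' : Matrix (Fin N) (Fin m) ℝ[X] := Matrix.of fun l b => B l b
  have hAB : Matrix.of M = A' * B' := by
    ext1 a b
    rw [Matrix.mul_apply, Matrix.of_apply, hN₀ a b N (hN a b), Finset.sum_range]
    rfl
  have key : QNonneg ((m.factorial : ℝ[X]) * (A' * B').det) := by
    rw [factorial_mul_det_mul]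
    refine QNonneg.sum _ _ fun f _ => ?_
    by_cases hf : Function.Injective f
    · -- Sorting `f` changes both minors by the same sign.
      have hg : StrictMono (f ∘ Tuple.sort f) :=
        (Tuple.monotone_sort f).strictMono_of_injective (hf.comp (Tuple.sort f).injective)
      set σ := Tuple.sort f
      have e1 : (A'.submatrix id f).submatrix id σ
          = Matrix.of fun a b => A a (((f ∘ σ) b : Fin N) : ℕ) := rfl
      have e2 : (B'.submatrix f id).submatrix σ id
          = Matrix.of fun a b => B (((f ∘ σ) a : Fin N) : ℕ) b := rfl
      have p := (hA (fun b => ((f ∘ σ) b : Fin N)) hg).mul (hB (fun b => ((f ∘ σ) b : Fin N)) hg)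
      rw [← e1, ← e2, Matrix.det_permute, Matrix.det_permute'] at p
      have hs : ((Equiv.Perm.sign σ : ℤ) : ℝ[X]) * ((Equiv.Perm.sign σ : ℤ) : ℝ[X]) = 1 := by
        rw [← Int.cast_mul, Int.units_coe_mul_self, Int.cast_one]
      rw [mul_mul_mul_comm, hs, one_mul] at p
      exact p
    · obtain ⟨a, b, hab, hne⟩ : ∃ a b, f a = f b ∧ a ≠ b := by
        simpa [Function.Injective] using hf
      rw [Matrix.det_zero_of_row_eq (M := B'.submatrix f id) hne (by ext; simp [hab]), mul_zero]
      exact QNonneg.zero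
  intro i
  have h := key i
  rw [← hAB, ← C_eq_natCast, coeff_C_mul] at h
  exact nonneg_of_mul_nonneg_right h (by exact_mod_cast m.factorial_pos)

lemma QTP.of_mul {A B M : ℕ → ℕ → ℝ[X]} (hA : QTP A) (hB : QTP B)
    (hM : ∀ i j, ∃ N₀, ∀ N ≥ N₀, M i j = ∑ l ∈ Finset.range N, A i l * B l j) : QTP M :=
  fun m hm i j hi hj => det_mul_qnonneg (fun a l => A (i a) l) (fun l b => B l (j b))
    (fun a b => M (i a) (j b)) (fun _ _ => hM _ _) (fun f hf => hA m hm i f hi hf)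
    (fun f hf => hB m hm f j hf hj)

lemma QTP.transpose {A : ℕ → ℕ → ℝ[X]} (hA : QTP A) : QTP fun i j => A j i :=
  fun m hm i j hi hj => by
    rw [← Matrix.det_transpose]
    exact hA m hm j i hj hi

/-! ### Staircase matrices and the tridiagonal matrix -/

/-- The staircase matrix whose row `k` has the entries `x k, y k, z k` in the columns
`2k, 2k+1, 2k+2` and zeros elsewhere. -/
noncomputable def stair (x y z : ℕ → ℝ[X]) (k p : ℕ) : ℝ[X] :=
  (if p = 2 * k then x k else 0) + (if p = 2 * k + 1 then y k else 0)
    + (if p = 2 * k + 2 then z k else 0)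

lemma sum_stair (x y z : ℕ → ℝ[X]) (f : ℕ → ℝ[X]) (k N : ℕ) (hN : 2 * k + 3 ≤ N) :
    ∑ p ∈ Finset.range N, stair x y z k p * f p =
      x k * f (2 * k) + y k * f (2 * k + 1) + z k * f (2 * k + 2) := by
  have h1 : 2 * k < N := by omega
  have h2 : 2 * k + 1 < N := by omega
  have h3 : 2 * k + 2 < N := by omega
  simp [stair, add_mul, Finset.sum_add_distrib, ite_mul, h1, h2, h3]

lemma stair_eq_zero {x y z : ℕ → ℝ[X]} {k p : ℕ} (h : p < 2 * k ∨ 2 * k + 2 < p) :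
    stair x y z k p = 0 := by
  rw [stair, if_neg (by omega), if_neg (by omega), if_neg (by omega)]; simp

/-- Consecutive rows of a staircase matrix overlap in a single column, so an inversion of a
permutation hits a zero entry: each minor equals the product of its diagonal entries. -/
lemma qtp_stair {x y z : ℕ → ℝ[X]} (hx : ∀ k, QNonneg (x k)) (hy : ∀ k, QNonneg (y k))
    (hz : ∀ k, QNonneg (z k)) : QTP (stair x y z) := by
  intro m _ i j hi hj
  have hdet : (Matrix.of fun a b => stair x y z (i a) (j b)).det
      = ∏ a, stair x y z (i a) (j a) := by
    rw [← Matrix.det_transpose, Matrix.det_apply', Finset.sum_eq_single 1]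
    · simp
    · intro σ _ hσ
      obtain ⟨a, b, hab, hσab⟩ : ∃ a b, a < b ∧ σ b < σ a := by
        by_contra! hcon
        have hmono : StrictMono σ :=
          Monotone.strictMono_of_injective (fun a b hab => by
            rcases hab.eq_or_lt with rfl | h
            · exact le_rfl
            · exact hcon a b h) σ.injective
        apply hσ
        ext a
        have := congrArg (fun e : Fin m ≃o Fin m => e a)
          (Subsingleton.elim (hmono.orderIsoOfSurjective σ σ.surjective) (OrderIso.refl _))
        simpa using congrArg Fin.val this
      have h1 := hi hab
      have h2 := hj hσab
      have h0 : stair x y z (i a) (j (σ a)) = 0 ∨ stair x y z (i b) (j (σ b)) = 0 := by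
        by_cases h : j (σ b) < 2 * i b
        · exact Or.inr (stair_eq_zero (Or.inl h))
        · exact Or.inl (stair_eq_zero (Or.inr (by omega)))
      rw [mul_eq_zero]
      right
      rcases h0 with h0 | h0
      · exact Finset.prod_eq_zero (Finset.mem_univ a) h0
      · exact Finset.prod_eq_zero (Finset.mem_univ b) h0
    · simp
  rw [hdet]
  refine QNonneg.prod _ _ fun a _ => QNonneg.add (QNonneg.add ?_ ?_) ?_ <;> split_ifs <;>
    first | exact QNonneg.zero | exact hx _ | exact hy _ | exact hz _

/-- The tridiagonal production matrix: `s` on the diagonal, `r` above it and `t` below it. -/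
noncomputable def tri (r s t : ℕ → ℝ[X]) (k l : ℕ) : ℝ[X] :=
  (if l = k + 1 then r k else 0) + (if l = k then s k else 0) + (if k = l + 1 then t k else 0)

lemma sum_mul_tri_zero (r s t : ℕ → ℝ[X]) (f : ℕ → ℝ[X]) (N : ℕ) (hN : 2 ≤ N) :
    ∑ k ∈ Finset.range N, f k * tri r s t k 0 = s 0 * f 0 + t 1 * f 1 := by
  have h1 : 0 < N := by omega
  have h2 : 1 < N := by omega
  simp [tri, mul_add, Finset.sum_add_distrib, mul_ite, h1, h2]
  ring

lemma sum_mul_tri_succ (r s t : ℕ → ℝ[X]) (f : ℕ → ℝ[X]) (l N : ℕ) (hN : l + 3 ≤ N) :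
    ∑ k ∈ Finset.range N, f k * tri r s t k (l + 1)
      = r l * f l + s (l + 1) * f (l + 1) + t (l + 2) * f (l + 2) := by
  have h1 : l < N := by omega
  have h2 : l + 1 < N := by omega
  have h3 : l + 2 < N := by omega
  simp [tri, mul_add, Finset.sum_add_distrib, mul_ite, h1, h2, h3]
  ring

/-- With `e k = s k - (r k * t (k + 1) + a k)`, where `a 0 = 0` and `a k = 1` for `k ≥ 1`, the
tridiagonal matrix is the product of `stair a e r` and the transpose of
`stair 1 1 (fun k => t (k + 1))`. -/
lemma qtp_tri (r s t : ℕ → ℝ[X]) (hr : ∀ k, QNonneg (r k)) (ht : ∀ k, 1 ≤ k → QNonneg (t k))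
    (h0 : QNonneg (s 0 - r 0 * t 1)) (h1 : ∀ k, 1 ≤ k → QNonneg (s k - (r k * t (k + 1) + 1))) :
    QTP (tri r s t) := by
  let a : ℕ → ℝ[X] := fun k => if k = 0 then 0 else 1
  let e : ℕ → ℝ[X] := fun k => s k - (r k * t (k + 1) + a k)
  have ha : ∀ k, QNonneg (a k) := fun k => by
    by_cases hk : k = 0
    · simpa [a, hk] using QNonneg.zero
    · simpa [a, hk] using QNonneg.one
  have he : ∀ k, QNonneg (e k) := fun k => by
    by_cases hk : k = 0
    · subst hk; simpa [e, a] using h0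
    · simpa [e, a, hk] using h1 k (by omega)
  refine (qtp_stair ha he hr).of_mul
    (qtp_stair (fun _ => QNonneg.one) (fun _ => QNonneg.one)
      (fun k => ht (k + 1) (by omega)) : QTP (stair 1 1 fun k => t (k + 1))).transpose
    fun k l => ⟨2 * k + 3, fun N hN => ?_⟩
  rw [sum_stair a e r _ k N hN]
  simp only [stair, tri, Pi.one_apply]
  rcases lt_trichotomy k l with h | h | h
  · by_cases h' : l = k + 1
    · subst h'
      rw [if_pos rfl, if_neg (by omega), if_neg (by omega), if_neg (by omega), if_neg (by omega),
        if_neg (by omega), if_neg (by omega), if_neg (by omega), if_neg (by omega),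
        if_pos (by omega), if_neg (by omega), if_neg (by omega)]
      ring
    · simp only [show ¬ (l = k + 1) by omega, show ¬ (l = k) by omega,
        show ¬ (k = l + 1) by omega, show ¬ (2 * k = 2 * l) by omega,
        show ¬ (2 * k = 2 * l + 1) by omega, show ¬ (2 * k = 2 * l + 2) by omega,
        show ¬ (2 * k + 1 = 2 * l) by omega,
        show ¬ (2 * k + 1 = 2 * l + 1) by omega, show ¬ (2 * k + 1 = 2 * l + 2) by omega,
        show ¬ (2 * k + 2 = 2 * l) by omega,
        show ¬ (2 * k + 2 = 2 * l + 1) by omega, show ¬ (2 * k + 2 = 2 * l + 2) by omega,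
        if_false]
      ring
  · subst h
    simp [e]
    ring
  · by_cases h' : k = l + 1
    · subst h'
      rw [show 2 * (l + 1) = 2 * l + 2 by omega]
      simp [a, show ¬ (l = l + 1 + 1) by omega, show ¬ (2 * l + 2 + 1 = 2 * l) by omega,
        show ¬ (2 * l + 2 + 2 = 2 * l) by omega]
    · simp only [show ¬ (l = k + 1) by omega, show ¬ (l = k) by omega,
        show ¬ (k = l + 1) by omega, show ¬ (2 * k = 2 * l) by omega,
        show ¬ (2 * k = 2 * l + 1) by omega, show ¬ (2 * k = 2 * l + 2) by omega,
        show ¬ (2 * k + 1 = 2 * l) by omega,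
        show ¬ (2 * k + 1 = 2 * l + 1) by omega, show ¬ (2 * k + 1 = 2 * l + 2) by omega,
        show ¬ (2 * k + 2 = 2 * l) by omega,
        show ¬ (2 * k + 2 = 2 * l + 1) by omega, show ¬ (2 * k + 2 = 2 * l + 2) by omega,
        if_false]
      ring

/-! ### The Catalan–Stieltjes matrix -/

/-- A matrix with zeroth row `(1, 0, 0, …)` whose successive rows are obtained by multiplying by a
totally positive matrix `J` on the right is totally positive. -/
lemma qtp_of_production {J c : ℕ → ℕ → ℝ[X]} (hJ : QTP J)
    (h00 : c 0 0 = 1) (h0 : ∀ k, 0 < k → c 0 k = 0)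
    (hstep : ∀ n l, ∃ N₀, ∀ N ≥ N₀, c (n + 1) l = ∑ k ∈ Finset.range N, c n k * J k l) :
    QTP c := by
  have main : ∀ N m : ℕ, ∀ i j : Fin m → ℕ, StrictMono i → StrictMono j → (∀ a, i a < N) →
      QNonneg (Matrix.of fun a b => c (i a) (j b)).det := by
    intro N
    induction N with
    | zero =>
      intro m i j _ _ hlt
      rcases m with _ | m
      · simpa using QNonneg.one
      · exact absurd (hlt 0) (by omega)
    | succ N ih =>
      -- Minors avoiding the zeroth row reduce to earlier rows by Cauchy–Binet.
      have pos : ∀ m : ℕ, ∀ i j : Fin m → ℕ, StrictMono i → StrictMono j →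
          (∀ a, i a < N + 1) → (∀ a, 0 < i a) →
          QNonneg (Matrix.of fun a b => c (i a) (j b)).det := by
        intro m i j hi hj hlt hpos
        rcases Nat.eq_zero_or_pos m with rfl | hm
        · simpa using QNonneg.one
        refine det_mul_qnonneg (fun a l => c (i a - 1) l) (fun l b => J l (j b))
          (fun a b => c (i a) (j b)) (fun a b => ?_) (fun f hf => ?_)
          (fun f hf => hJ m hm f j hf hj)
        · have := hstep (i a - 1) (j b)
          rwa [Nat.sub_add_cancel (hpos a)] at this
        · refine ih m (fun a => i a - 1) f (fun a b hab => ?_) hf fun a => ?_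
          · have := hi hab
            have := hpos a
            show i a - 1 < i b - 1
            omega
          · have := hlt a
            have := hpos a
            show i a - 1 < N
            omega
      intro m i j hi hj hlt
      by_cases hpos : ∀ a, 0 < i a
      · exact pos m i j hi hj hlt hpos
      · push Not at hpos
        obtain ⟨a₀, ha₀⟩ := hpos
        rcases m with _ | m
        · exact a₀.elim0
        have hi0 : i 0 = 0 := by
          have := hi.monotone (Fin.zero_le a₀)
          omega
        -- Only the entry in column `0` of the zeroth row can be nonzero.
        rw [Matrix.det_succ_row_zero, Finset.sum_eq_single 0]
        · by_cases hj0 : j 0 = 0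
          · have hrest := pos m (fun a => i a.succ) (fun b => j b.succ)
              (fun a b hab => hi (Fin.succ_lt_succ_iff.2 hab))
              (fun a b hab => hj (Fin.succ_lt_succ_iff.2 hab)) (fun a => hlt _)
              (fun a => by have := hi (Fin.succ_pos a); omega)
            have hsub : (Matrix.of fun a b => c (i a) (j b)).submatrix Fin.succ
                (Fin.succAbove 0) = Matrix.of fun a b => c (i a.succ) (j b.succ) := by
              ext1 a b
              simp
            rw [hsub, Matrix.of_apply, hi0, hj0, h00]
            simpa using hrest
          · rw [Matrix.of_apply, hi0, h0 _ (Nat.pos_of_ne_zero hj0)]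
            simpa using QNonneg.zero
        · intro b _ hb
          have := hj (Fin.pos_iff_ne_zero.2 hb)
          rw [Matrix.of_apply, hi0, h0 _ (by omega)]
          simp
        · simp
  intro m _ i j hi hj
  refine main (∑ a, i a + 1) m i j hi hj fun a => Nat.lt_succ_of_le ?_
  exact Finset.single_le_sum (f := i) (fun _ _ => Nat.zero_le _) (Finset.mem_univ a)

lemma exists_sum_mul_tri (r s t : ℕ → ℝ[X]) (c : ℕ → ℕ → ℝ[X])
    (hrec0 : ∀ n, c (n + 1) 0 = s 0 * c n 0 + t 1 * c n 1)
    (hrec : ∀ n k, c (n + 1) (k + 1) =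
      r k * c n k + s (k + 1) * c n (k + 1) + t (k + 2) * c n (k + 2))
    (n l N : ℕ) (hN : l + 2 ≤ N) :
    c (n + 1) l = ∑ k ∈ Finset.range N, c n k * tri r s t k l := by
  rcases l with _ | l
  · rw [sum_mul_tri_zero _ _ _ _ _ hN, hrec0]
  · rw [sum_mul_tri_succ _ _ _ _ _ _ hN, hrec]

lemma qtp_cs (r s t : ℕ → ℝ[X]) (c : ℕ → ℕ → ℝ[X])
    (hr : ∀ k, QNonneg (r k)) (ht : ∀ k, 1 ≤ k → QNonneg (t k))
    (hc00 : c 0 0 = 1)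
    (hupper : ∀ n k, n < k → c n k = 0)
    (hrec0 : ∀ n, c (n + 1) 0 = s 0 * c n 0 + t 1 * c n 1)
    (hrec : ∀ n k, c (n + 1) (k + 1) =
      r k * c n k + s (k + 1) * c n (k + 1) + t (k + 2) * c n (k + 2))
    (h0 : QNonneg (s 0 - r 0 * t 1)) (h1 : ∀ k, 1 ≤ k → QNonneg (s k - (r k * t (k + 1) + 1))) :
    QTP c :=
  qtp_of_production (qtp_tri r s t hr ht h0 h1) hc00 (hupper 0)
    fun n l => ⟨l + 2, fun N hN => exists_sum_mul_tri r s t c hrec0 hrec n l N hN⟩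

/-! ### The Hankel matrix -/

/-- The Catalan–Stieltjes matrix, defined by its recurrence. -/
noncomputable def cs (r s t : ℕ → ℝ[X]) : ℕ → ℕ → ℝ[X]
  | 0, 0 => 1
  | 0, _ + 1 => 0
  | n + 1, 0 => s 0 * cs r s t n 0 + t 1 * cs r s t n 1
  | n + 1, k + 1 => r k * cs r s t n k + s (k + 1) * cs r s t n (k + 1)
      + t (k + 2) * cs r s t n (k + 2)

lemma cs_upper (r s t : ℕ → ℝ[X]) : ∀ n k, n < k → cs r s t n k = 0 := by
  intro n
  induction n with
  | zero =>
    intro k hk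
    obtain ⟨k, rfl⟩ := Nat.exists_eq_succ_of_ne_zero hk.ne'
    rw [cs]
  | succ n ih =>
    intro k hk
    obtain ⟨k, rfl⟩ := Nat.exists_eq_succ_of_ne_zero (by omega : k ≠ 0)
    rw [cs, ih k (by omega), ih (k + 1) (by omega), ih (k + 2) (by omega)]
    simp

/-- Exchanging the roles of `r` and `t` transposes the tridiagonal matrix. -/
lemma tri_swap (r s t : ℕ → ℝ[X]) (k l : ℕ) :
    tri (fun k => t (k + 1)) s (fun k => r (k - 1)) k l = tri r s t l k := by
  unfold tri
  rcases lt_trichotomy k l with h | h | h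
  · by_cases h' : l = k + 1
    · subst h'; simp [show ¬ (k = k + 1 + 1) by omega, add_comm (t _)]
    · simp [show ¬ (l = k + 1) by omega, show ¬ (l = k) by omega, show ¬ (k = l + 1) by omega,
        show ¬ (k = l) by omega]
  · subst h; simp
  · by_cases h' : k = l + 1
    · subst h'; simp [show ¬ (l = l + 1 + 1) by omega]
    · simp [show ¬ (l = k + 1) by omega, show ¬ (l = k) by omega, show ¬ (k = l + 1) by omega,
        show ¬ (k = l) by omega]

theorem stmt3 (r s t : ℕ → Polynomial ℝ) (c : ℕ → ℕ → Polynomial ℝ)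
    (hr : ∀ k, QNonneg (r k)) (hs : ∀ k, QNonneg (s k)) (ht : ∀ k, 1 ≤ k → QNonneg (t k))
    (hc00 : c 0 0 = 1)
    (hupper : ∀ n k, n < k → c n k = 0)
    (hrec0 : ∀ n, c (n + 1) 0 = s 0 * c n 0 + t 1 * c n 1)
    (hrec : ∀ n k, c (n + 1) (k + 1) =
      r k * c n k + s (k + 1) * c n (k + 1) + t (k + 2) * c n (k + 2))
    (hcond : (QNonneg (s 0 - r 0 * t 1) ∧ ∀ k, 1 ≤ k → QNonneg (s k - (r k * t (k + 1) + 1)))) :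
    QTP c ∧ QTP (fun i j => c (i + j) 0) := by
  obtain ⟨h0, h1⟩ := hcond
  have hC := qtp_cs r s t c hr ht hc00 hupper hrec0 hrec h0 h1
  refine ⟨hC, ?_⟩
  -- Row `n` of `d` is column `0` of the `n`-th power of the tridiagonal matrix.
  obtain ⟨d, hd⟩ : ∃ d, d = cs (fun k => t (k + 1)) s (fun k => r (k - 1)) := ⟨_, rfl⟩
  have hdrec0 : ∀ n, d (n + 1) 0 = s 0 * d n 0 + r (1 - 1) * d n 1 := fun n => by rw [hd, cs]
  have hdrec : ∀ n k, d (n + 1) (k + 1) =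
      t (k + 1) * d n k + s (k + 1) * d n (k + 1) + r (k + 2 - 1) * d n (k + 2) :=
    fun n k => by rw [hd, cs]
  have hdup : ∀ n k, n < k → d n k = 0 := hd ▸ cs_upper _ _ _
  have hd00 : d 0 0 = 1 := by rw [hd, cs]
  have hD : QTP d := by
    refine qtp_cs (fun k => t (k + 1)) s (fun k => r (k - 1)) d (fun k => ht _ (by omega))
      (fun k _ => hr _) hd00 hdup hdrec0 hdrec ?_ fun k hk => ?_
    · simpa [mul_comm] using h0
    · simpa [mul_comm] using h1 k hk
  have hmove : ∀ j i N, i + j + 2 ≤ N →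
      c (i + j) 0 = ∑ k ∈ Finset.range N, c i k * d j k := by
    intro j
    induction j with
    | zero =>
      intro i N hN
      rw [Finset.sum_eq_single 0]
      · simp [hd00]
      · intro k _ hk
        rw [hdup 0 k (by omega), mul_zero]
      · intro h
        simp at h
        omega
    | succ j ih =>
      intro i N hN
      rw [show i + (j + 1) = (i + 1) + j by omega, ih (i + 1) N (by omega)]
      have e1 : ∀ l ∈ Finset.range N, c (i + 1) l * d j l
          = ∑ k ∈ Finset.range N, c i k * tri r s t k l * d j l := by
        intro l _
        by_cases hl : j < l
        · simp [hdup j l hl]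
        · rw [exists_sum_mul_tri r s t c hrec0 hrec i l N (by omega), Finset.sum_mul]
      have e2 : ∀ k ∈ Finset.range N, c i k * d (j + 1) k
          = ∑ l ∈ Finset.range N, c i k * tri r s t k l * d j l := by
        intro k _
        by_cases hk : i < k
        · simp [hupper i k hk]
        · rw [exists_sum_mul_tri (fun k => t (k + 1)) s (fun k => r (k - 1)) d hdrec0 hdrec j k N
            (by omega), Finset.mul_sum]
          refine Finset.sum_congr rfl fun l _ => ?_
          rw [tri_swap]
          ring
      rw [Finset.sum_congr rfl e1, Finset.sum_congr rfl e2, Finset.sum_comm]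
  exact hC.of_mul hD.transpose fun i j => ⟨i + j + 2, fun N hN => hmove j i N hN⟩
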